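/- For q ≥ 2, the linear map θ: V_r → V_[adj] determined by θ(σ₀⊗τ) = v^[adj]_τ for τ ∈ σ_q is a linear isomorphism and intertwines the two-copy representation: θ(φ⊗²(U)x) = φ⊗²(U)θ(x) for all U ∈ 𝒩_q and x ∈ V_r. Likewise the linear map θ′: V_r → V_{adj} determined by θ′(σ₀⊗τ) = v^{adj}_τ is a linear isomorphism intertwining φ⊗². In particular V_[adj] and V_{adj} are invariant under φ⊗². -/

import Mathlib

open Matrix MeasureTheory
open scoped Kronecker

noncomputable section

namespace CliffordPaper

/-- The single-qubit Pauli matrices `1, X, Y, Z`. -/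
def pauli1 : Fin 4 → Matrix (Fin 2) (Fin 2) ℂ :=
  ![1, !![0, 1; 1, 0], !![0, -Complex.I; Complex.I, 0], !![1, 0; 0, -1]]

/-- Index type for the computational basis of `q` qubits. -/
abbrev Idx (q : ℕ) := Fin q → Fin 2

/-- The space `M_d` of `d × d` complex matrices, `d = 2^q`. -/
abbrev Mat (q : ℕ) := Matrix (Idx q) (Idx q) ℂ

/-- The space `M_d ⊗ M_d`, realized as matrices indexed by the product index set
(the tensor factors combine via the Kronecker product `⊗ₖ`). -/
abbrev BMat (q : ℕ) := Matrix (Idx q × Idx q) (Idx q × Idx q) ℂ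

/-- The `q`-fold Kronecker product of single-qubit Paulis with labels `a`. -/
def PauliOp {q : ℕ} (a : Fin q → Fin 4) : Mat q :=
  Matrix.of fun x y => ∏ i, pauli1 (a i) (x i) (y i)

/-- `√d` as a complex number, where `d = 2^q`. -/
def sqrtd (q : ℕ) : ℂ := (Real.sqrt (2 ^ q) : ℝ)

/-- The set `σ̂_q` of normalized Pauli operators. -/
def sigmaHat (q : ℕ) : Set (Mat q) :=
  {M | ∃ a : Fin q → Fin 4, M = (sqrtd q)⁻¹ • PauliOp a}

/-- The normalized identity `σ₀ = 1/√d`. -/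
def sigma0 (q : ℕ) : Mat q := (sqrtd q)⁻¹ • (1 : Mat q)

/-- `σ_q = σ̂_q \ {σ₀}`. -/
def sigmaSet (q : ℕ) : Set (Mat q) := sigmaHat q \ {sigma0 q}

/-- `N_τ`: the normalized nonidentity Paulis anticommuting with `τ`. -/
def NSet {q : ℕ} (τ : Mat q) : Set (Mat q) :=
  {σ | σ ∈ sigmaSet q ∧ σ * τ + τ * σ = 0}

/-- `C_τ`: the normalized nonidentity Paulis distinct from `τ` commuting with `τ`. -/
def CSet {q : ℕ} (τ : Mat q) : Set (Mat q) :=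
  {σ | σ ∈ sigmaSet q ∧ σ ≠ τ ∧ σ * τ = τ * σ}

/-- `Ĉ_τ`: the normalized Paulis commuting with `τ`. -/
def CHatSet {q : ℕ} (τ : Mat q) : Set (Mat q) :=
  {σ | σ ∈ sigmaHat q ∧ σ * τ = τ * σ}

/-- The normalized product `σ·τ = √d στ`. -/
def nprod {q : ℕ} (σ τ : Mat q) : Mat q := sqrtd q • (σ * τ)

/-- The Clifford normalizer `𝒩_q`: unitaries mapping normalized Paulis to
signed normalized Paulis under conjugation. -/
def Cliff (q : ℕ) : Set (Mat q) :=
  {U | U ∈ Matrix.unitaryGroup (Idx q) ℂ ∧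
    ∀ σ ∈ sigmaHat q, ∃ τ ∈ sigmaHat q, U * σ * Uᴴ = τ ∨ U * σ * Uᴴ = -τ}

/-- The two-copy representation `φ⊗²(U) : A ⊗ B ↦ (UAU†) ⊗ (UBU†)`, extended linearly. -/
def twoCopy {q : ℕ} (U : Mat q) : BMat q →ₗ[ℂ] BMat q where
  toFun M := (U ⊗ₖ U) * M * (U ⊗ₖ U)ᴴ
  map_add' M N := by
    show (U ⊗ₖ U) * (M + N) * (U ⊗ₖ U)ᴴ = (U ⊗ₖ U) * M * (U ⊗ₖ U)ᴴ + (U ⊗ₖ U) * N * (U ⊗ₖ U)ᴴ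
    rw [Matrix.mul_add, Matrix.add_mul]
  map_smul' c M := by
    show (U ⊗ₖ U) * (c • M) * (U ⊗ₖ U)ᴴ = c • ((U ⊗ₖ U) * M * (U ⊗ₖ U)ᴴ)
    rw [Matrix.mul_smul, Matrix.smul_mul]

/-- The Hilbert–Schmidt inner product `⟨A, B⟩ = tr(A† B)`. -/
def hs {q : ℕ} (A B : BMat q) : ℂ := (Aᴴ * B).trace

/-- A subspace is invariant under the two-copy representation of `𝒩_q`. -/
def IsInvariant (q : ℕ) (W : Submodule ℂ (BMat q)) : Prop :=
  ∀ U ∈ Cliff q, ∀ v ∈ W, twoCopy U v ∈ W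

/-- A nonzero invariant subspace carries an irreducible subrepresentation. -/
def CarriesIrred (q : ℕ) (W : Submodule ℂ (BMat q)) : Prop :=
  W ≠ ⊥ ∧ IsInvariant q W ∧ ∀ W' ≤ W, IsInvariant q W' → W' = ⊥ ∨ W' = W

/-- Two invariant subspaces carry equivalent subrepresentations: there is a linear
isomorphism between them intertwining the two-copy representation. -/
def EquivRep (q : ℕ) (W W' : Submodule ℂ (BMat q)) : Prop :=
  ∃ T : BMat q →ₗ[ℂ] BMat q, Submodule.map T W = W' ∧
    (∀ x ∈ W, T x = 0 → x = 0) ∧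
    ∀ U ∈ Cliff q, ∀ x ∈ W, T (twoCopy U x) = twoCopy U (T x)

/-- `S_{σ,τ} = (σ⊗τ + τ⊗σ)/√2`. -/
def SVec {q : ℕ} (σ τ : Mat q) : BMat q :=
  ((Real.sqrt 2 : ℂ))⁻¹ • (σ ⊗ₖ τ + τ ⊗ₖ σ)

/-- `A_{σ,τ} = (σ⊗τ − τ⊗σ)/√2`. -/
def AVec {q : ℕ} (σ τ : Mat q) : BMat q :=
  ((Real.sqrt 2 : ℂ))⁻¹ • (σ ⊗ₖ τ - τ ⊗ₖ σ)

/-- The trivial sector `V_id`. -/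
def Vid (q : ℕ) : Submodule ℂ (BMat q) :=
  Submodule.span ℂ {sigma0 q ⊗ₖ sigma0 q}

/-- The right adjoint sector `V_r`. -/
def Vr (q : ℕ) : Submodule ℂ (BMat q) :=
  Submodule.span ℂ {M | ∃ τ ∈ sigmaSet q, M = sigma0 q ⊗ₖ τ}

/-- The left adjoint sector `V_l`. -/
def Vl (q : ℕ) : Submodule ℂ (BMat q) :=
  Submodule.span ℂ {M | ∃ τ ∈ sigmaSet q, M = τ ⊗ₖ sigma0 q}

/-- The diagonal sector `V_d`. -/
def Vdiag (q : ℕ) : Submodule ℂ (BMat q) :=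
  Submodule.span ℂ {M | ∃ τ ∈ sigmaSet q, M = τ ⊗ₖ τ}

/-- The symmetric commuting sector `V_[S]`. -/
def VScom (q : ℕ) : Submodule ℂ (BMat q) :=
  Submodule.span ℂ {M | ∃ τ ∈ sigmaSet q, ∃ σ ∈ CSet τ, M = SVec σ τ}

/-- The symmetric anti-commuting sector `V_{S}`. -/
def VSanti (q : ℕ) : Submodule ℂ (BMat q) :=
  Submodule.span ℂ {M | ∃ τ ∈ sigmaSet q, ∃ σ ∈ NSet τ, M = SVec σ τ}

/-- The antisymmetric commuting sector `V_[A]`. -/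
def VAcom (q : ℕ) : Submodule ℂ (BMat q) :=
  Submodule.span ℂ {M | ∃ τ ∈ sigmaSet q, ∃ σ ∈ CSet τ, M = AVec σ τ}

/-- The antisymmetric anti-commuting sector `V_{A}`. -/
def VAanti (q : ℕ) : Submodule ℂ (BMat q) :=
  Submodule.span ℂ {M | ∃ τ ∈ sigmaSet q, ∃ σ ∈ NSet τ, M = AVec σ τ}

/-- `V_[A]` presented with the spanning vectors `A_{σ,σ·τ}`, `σ ∈ C_τ`. -/
def VAcom' (q : ℕ) : Submodule ℂ (BMat q) :=
  Submodule.span ℂ {M | ∃ τ ∈ sigmaSet q, ∃ σ ∈ CSet τ, M = AVec σ (nprod σ τ)}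

/-- `V_0 = span{Σ_{σ∈σ_q} σ⊗σ}`. -/
def V0diag (q : ℕ) : Submodule ℂ (BMat q) :=
  Submodule.span ℂ {∑ᶠ σ ∈ sigmaSet q, σ ⊗ₖ σ}

/-- `V_1`, the "positive" part of the diagonal sector. -/
def V1diag (q : ℕ) : Submodule ℂ (BMat q) :=
  Submodule.span ℂ {v | ∃ lam : Mat q → ℂ,
    v = ∑ᶠ σ ∈ sigmaSet q, lam σ • (σ ⊗ₖ σ) ∧
    (∑ᶠ σ ∈ sigmaSet q, lam σ) = 0 ∧
    ∀ τ ∈ sigmaSet q, (∑ᶠ σ ∈ NSet τ, lam σ) = -((2 ^ q : ℂ) / 2) * lam τ}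

/-- `V_2`, the "negative" part of the diagonal sector. -/
def V2diag (q : ℕ) : Submodule ℂ (BMat q) :=
  Submodule.span ℂ {v | ∃ lam : Mat q → ℂ,
    v = ∑ᶠ σ ∈ sigmaSet q, lam σ • (σ ⊗ₖ σ) ∧
    (∑ᶠ σ ∈ sigmaSet q, lam σ) = 0 ∧
    ∀ τ ∈ sigmaSet q, (∑ᶠ σ ∈ NSet τ, lam σ) = ((2 ^ q : ℂ) / 2) * lam τ}

/-- `v^[adj]_τ = (2|C_τ|)^{-1/2} Σ_{σ∈C_τ} S_{σ,σ·τ}`. -/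
def vadjS {q : ℕ} (τ : Mat q) : BMat q :=
  ((Real.sqrt (2 * ((CSet τ).ncard : ℝ)) : ℂ))⁻¹ • ∑ᶠ σ ∈ CSet τ, SVec σ (nprod σ τ)

/-- `v^{adj}_τ = (2|N_τ|)^{-1/2} Σ_{σ∈N_τ} A_{σ,iσ·τ}`. -/
def vadjA {q : ℕ} (τ : Mat q) : BMat q :=
  ((Real.sqrt (2 * ((NSet τ).ncard : ℝ)) : ℂ))⁻¹ •
    ∑ᶠ σ ∈ NSet τ, AVec σ (Complex.I • nprod σ τ)

/-- The symmetric adjoint sector `V_[adj]`. -/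
def VadjS (q : ℕ) : Submodule ℂ (BMat q) :=
  Submodule.span ℂ {M | ∃ τ ∈ sigmaSet q, M = vadjS τ}

/-- The antisymmetric adjoint sector `V_{adj}`. -/
def VadjA (q : ℕ) : Submodule ℂ (BMat q) :=
  Submodule.span ℂ {M | ∃ τ ∈ sigmaSet q, M = vadjA τ}

/-- The orthogonal complement `V^⊥_{adj}` of `V_{adj}` inside `V_{A}`. -/
def VadjAperp (q : ℕ) : Submodule ℂ (BMat q) :=
  Submodule.span ℂ {v | v ∈ VAanti q ∧ ∀ w ∈ VadjA q, hs w v = 0}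

/-- `V_{1}^τ`. -/
def V1symτ (q : ℕ) (τ : Mat q) : Submodule ℂ (BMat q) :=
  Submodule.span ℂ {v | ∃ lam : Mat q → ℂ,
    v = ∑ᶠ σ ∈ NSet τ, lam σ • SVec σ (Complex.I • nprod σ τ) ∧
    ∀ ν ∈ NSet τ, (∑ᶠ σ ∈ NSet τ ∩ CSet ν, lam σ) - (∑ᶠ σ ∈ NSet τ ∩ NSet ν, lam σ)
      = ((2 ^ q : ℂ) / 2) * lam ν}

/-- `V_{2}^τ`. -/
def V2symτ (q : ℕ) (τ : Mat q) : Submodule ℂ (BMat q) :=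
  Submodule.span ℂ {v | ∃ lam : Mat q → ℂ,
    v = ∑ᶠ σ ∈ NSet τ, lam σ • SVec σ (Complex.I • nprod σ τ) ∧
    ∀ ν ∈ NSet τ, (∑ᶠ σ ∈ NSet τ ∩ CSet ν, lam σ) - (∑ᶠ σ ∈ NSet τ ∩ NSet ν, lam σ)
      = -((2 ^ q : ℂ) / 2) * lam ν}

/-- `V_{1} = ⊕_τ V_{1}^τ`. -/
def V1sym (q : ℕ) : Submodule ℂ (BMat q) := ⨆ τ ∈ sigmaSet q, V1symτ q τ

/-- `V_{2} = ⊕_τ V_{2}^τ`. -/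
def V2sym (q : ℕ) : Submodule ℂ (BMat q) := ⨆ τ ∈ sigmaSet q, V2symτ q τ

/-- The defining property of the map `Θ` on `V_[A]`. -/
def ThetaProp (q : ℕ) (Θ : BMat q →ₗ[ℂ] BMat q) : Prop :=
  ∀ τ ∈ sigmaSet q, ∀ σ ∈ CSet τ,
    Θ (AVec σ (nprod σ τ)) =
      (∑ᶠ σ' ∈ NSet τ ∩ CSet σ, AVec σ' (Complex.I • nprod σ' τ)) -
      ∑ᶠ σ' ∈ NSet τ ∩ NSet σ, AVec σ' (Complex.I • nprod σ' τ)

/-- `V` = span of off-diagonal products `σ⊗σ̂`, `σ ≠ σ̂`. -/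
def Voff (q : ℕ) : Submodule ℂ (BMat q) :=
  Submodule.span ℂ {M | ∃ σ ∈ sigmaSet q, ∃ σ' ∈ sigmaSet q, σ ≠ σ' ∧ M = σ ⊗ₖ σ'}

/-- `V^τ` = span of the `σ⊗σ̂` with `σ·σ̂ ∈ {τ, −τ, iτ, −iτ}`. -/
def Vtau (q : ℕ) (τ : Mat q) : Submodule ℂ (BMat q) :=
  Submodule.span ℂ {M | ∃ σ ∈ sigmaSet q, ∃ σ' ∈ sigmaSet q,
    (nprod σ σ' = τ ∨ nprod σ σ' = -τ ∨ nprod σ σ' = Complex.I • τ ∨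
      nprod σ σ' = -(Complex.I • τ)) ∧ M = σ ⊗ₖ σ'}

/-!
The normalized Paulis satisfy `∑ σ ⊗ σ = F`, the swap operator. For `ε = ±1` let
`K = 1 ⊗ τ + ε τ ⊗ 1`. The map `M ↦ (M K + ε K M) / 2` fixes `F K`, while it sends `σ ⊗ σ` to
`(σ ⊗ σ) K` or to `0` according to whether `σ τ = ε τ σ` or not. So the sums over `N_τ` and `C_τ`
collapse, a partial trace of the same identity gives `|N_τ| = d²/2` and `|C_τ| = d²/2 - 2`, and

* `v^{adj}_τ = (i/√2) F (σ₀ ⊗ τ - τ ⊗ σ₀)`,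
* `v^[adj]_τ = (2 (d² - 4))^{-1/2} (d F - 2) (σ₀ ⊗ τ + τ ⊗ σ₀)`.

Since `F` commutes with every `U ⊗ U`, both maps intertwine `φ⊗²`. They are injective because `F`
is invertible and, as `(d F - 2) (d F + 2) = d² - 4`, so is `d F - 2` as soon as `d ≠ 2`.
-/

section PiKronecker

variable {ι l m n R : Type*} [Fintype ι] [CommSemiring R]

/-- The Kronecker product of a finite family of matrices, with rows and columns indexed by
functions; `PauliOp a` is the case of the family `i ↦ pauli1 (a i)`. -/
def piKronecker (M : ι → Matrix m n R) : Matrix (ι → m) (ι → n) R :=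
  Matrix.of fun x y => ∏ i, M i (x i) (y i)

theorem piKronecker_mul [DecidableEq ι] [Fintype m]
    (M : ι → Matrix l m R) (N : ι → Matrix m n R) :
    piKronecker M * piKronecker N = piKronecker fun i => M i * N i := by
  ext x y
  simp [piKronecker, Matrix.mul_apply, ← Finset.prod_mul_distrib, Finset.prod_univ_sum]

theorem trace_piKronecker [DecidableEq ι] [Fintype n] (M : ι → Matrix n n R) :
    (piKronecker M).trace = ∏ i, (M i).trace := by
  simp [piKronecker, Matrix.trace, Finset.prod_univ_sum]

theorem piKronecker_one [DecidableEq n] :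
    piKronecker (fun _ : ι => (1 : Matrix n n R)) = 1 := by
  ext x y
  simp [piKronecker, Matrix.one_apply, Finset.prod_ite_zero, funext_iff]

theorem piKronecker_smul (c : ι → R) (M : ι → Matrix m n R) :
    (piKronecker fun i => c i • M i) = (∏ i, c i) • piKronecker M := by
  ext x y
  simp [piKronecker, Finset.prod_mul_distrib]

end PiKronecker

section Swap

variable {n R : Type*} [DecidableEq n] [CommSemiring R]

/-- The swap operator `a ⊗ b ↦ b ⊗ a` on the tensor square of `n → R`. -/
def swapMatrix : Matrix (n × n) (n × n) R :=
  Equiv.Perm.permMatrix R (Equiv.prodComm n n)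

theorem swapMatrix_apply (i j : n × n) :
    (swapMatrix i j : R) = if i.1 = j.2 ∧ i.2 = j.1 then 1 else 0 := by
  simp [swapMatrix, Prod.ext_iff, and_comm, eq_comm]

variable [Fintype n]

theorem swapMatrix_mul_self : (swapMatrix * swapMatrix : Matrix (n × n) (n × n) R) = 1 := by
  rw [swapMatrix, ← Matrix.permMatrix_mul,
    show Equiv.prodComm n n * Equiv.prodComm n n = (1 : Equiv.Perm (n × n)) from rfl,
    Matrix.permMatrix_one]

theorem swapMatrix_mul_kronecker (A B : Matrix n n R) :
    swapMatrix * (A ⊗ₖ B) = (B ⊗ₖ A) * swapMatrix := by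
  ext ⟨i, j⟩ ⟨k, l⟩
  simp [swapMatrix, PEquiv.toMatrix_toPEquiv_mul, PEquiv.mul_toMatrix_toPEquiv, mul_comm]

theorem swapMatrix_mul_kronecker_mul_swapMatrix (A B : Matrix n n R) :
    swapMatrix * (A ⊗ₖ B) * swapMatrix = B ⊗ₖ A := by
  rw [swapMatrix_mul_kronecker, mul_assoc, swapMatrix_mul_self, mul_one]

theorem commute_swapMatrix_kronecker_self (A : Matrix n n R) :
    Commute swapMatrix (A ⊗ₖ A) :=
  swapMatrix_mul_kronecker A A

theorem isUnit_smul_swapMatrix_sub_smul_one {K : Type*} [Field K] {a b : K}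
    (hab : a * a ≠ b * b) :
    IsUnit (a • swapMatrix - b • 1 : Matrix (n × n) (n × n) K) := by
  have hmul : (a • swapMatrix - b • 1 : Matrix (n × n) (n × n) K) * (a • swapMatrix + b • 1) =
      (a * a - b * b) • 1 := by
    simp only [sub_mul, mul_add, smul_mul_smul_comm, swapMatrix_mul_self, mul_one, one_mul,
      sub_smul, mul_comm b a]
    abel
  refine IsUnit.of_mul_eq_one ((a * a - b * b)⁻¹ • (a • swapMatrix + b • 1)) ?_
  rw [mul_smul_comm, hmul, inv_smul_smul₀ (sub_ne_zero.2 hab)]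

end Swap

section PartialTrace

variable {m n R : Type*} [Fintype m] [CommSemiring R]

/-- The partial trace over the first tensor factor. -/
def traceFst : Matrix (m × n) (m × n) R →ₗ[R] Matrix n n R where
  toFun M := Matrix.of fun j k => ∑ i, M (i, j) (i, k)
  map_add' M N := by ext; simp [Finset.sum_add_distrib]
  map_smul' c M := by ext; simp [Finset.mul_sum]

theorem traceFst_kronecker (A : Matrix m m R) (B : Matrix n n R) :
    traceFst (A ⊗ₖ B) = A.trace • B := by
  ext
  simp [traceFst, Matrix.trace, Finset.sum_mul]

theorem traceFst_swapMatrix_mul_kronecker [DecidableEq m] (A B : Matrix m m R) :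
    traceFst (swapMatrix * (A ⊗ₖ B)) = A * B := by
  ext
  simp [traceFst, swapMatrix, PEquiv.toMatrix_toPEquiv_mul, Matrix.mul_apply]

end PartialTrace

section SwapTwist

variable {n R : Type*} [DecidableEq n] [Fintype n] [CommSemiring R]

/-- The map `A ⊗ B ↦ G (A ⊗ B + ε B ⊗ A)`. Both adjoint isomorphisms have this form, with `G` in
the algebra generated by the swap operator and `ε = ±1`. -/
def swapTwist (G : Matrix (n × n) (n × n) R) (ε : R) :
    Matrix (n × n) (n × n) R →ₗ[R] Matrix (n × n) (n × n) R :=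
  LinearMap.mulLeft R G ∘ₗ
    (LinearMap.id + ε • LinearMap.mulLeftRight R (swapMatrix, swapMatrix))

theorem swapTwist_apply (G x : Matrix (n × n) (n × n) R) (ε : R) :
    swapTwist G ε x = G * (x + ε • (swapMatrix * x * swapMatrix)) := rfl

theorem swapTwist_kronecker (G : Matrix (n × n) (n × n) R) (ε : R) (A B : Matrix n n R) :
    swapTwist G ε (A ⊗ₖ B) = G * (A ⊗ₖ B + ε • (B ⊗ₖ A)) := by
  rw [swapTwist_apply, swapMatrix_mul_kronecker_mul_swapMatrix]

theorem swapTwist_conj {G V W : Matrix (n × n) (n × n) R} (ε : R) (hG : Commute G V)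
    (hV : Commute swapMatrix V) (hW : Commute swapMatrix W) (x : Matrix (n × n) (n × n) R) :
    swapTwist G ε (V * x * W) = V * swapTwist G ε x * W := by
  have hswap : swapMatrix * (V * x * W) * swapMatrix = V * (swapMatrix * x * swapMatrix) * W := by
    calc swapMatrix * (V * x * W) * swapMatrix = (swapMatrix * V) * x * (W * swapMatrix) := by
          simp only [mul_assoc]
      _ = V * (swapMatrix * x * swapMatrix) * W := by
          rw [hV.eq, ← hW.eq]; simp only [mul_assoc]
  rw [swapTwist_apply, swapTwist_apply, hswap, ← smul_mul_assoc, ← mul_smul_comm, ← add_mul,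
    ← mul_add]
  simp only [← mul_assoc, hG.eq]

end SwapTwist

section TwistedSum

variable {n R : Type*} [DecidableEq n] [CommSemiring R]

/-- The operator `1 ⊗ τ + ε τ ⊗ 1`: for `ε = ±1`, the symmetrization or antisymmetrization of
`1 ⊗ τ`, left unnormalized. -/
def twistedSum (ε : R) (τ : Matrix n n R) : Matrix (n × n) (n × n) R :=
  1 ⊗ₖ τ + ε • (τ ⊗ₖ 1)

variable [Fintype n]

theorem kronecker_self_mul_twistedSum (σ τ : Matrix n n R) (ε : R) :
    (σ ⊗ₖ σ) * twistedSum ε τ = σ ⊗ₖ (σ * τ) + ε • ((σ * τ) ⊗ₖ σ) := by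
  rw [twistedSum, mul_add, mul_smul_comm, ← Matrix.mul_kronecker_mul, ← Matrix.mul_kronecker_mul,
    mul_one]

theorem twistedSum_mul_kronecker_self {σ τ : Matrix n n R} {δ : R} (hδ : δ * δ = 1)
    (hστ : σ * τ = δ • (τ * σ)) (ε : R) :
    twistedSum ε τ * (σ ⊗ₖ σ) = δ • ((σ ⊗ₖ σ) * twistedSum ε τ) := by
  have hτσ : τ * σ = δ • (σ * τ) := by rw [hστ, smul_smul, hδ, one_smul]
  rw [kronecker_self_mul_twistedSum, twistedSum, add_mul, smul_mul_assoc,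
    ← Matrix.mul_kronecker_mul, ← Matrix.mul_kronecker_mul, one_mul, hτσ, Matrix.kronecker_smul,
    Matrix.smul_kronecker, smul_comm ε δ, ← smul_add]

theorem twistedSum_mul_swapMatrix {ε : R} (hε : ε * ε = 1) (τ : Matrix n n R) :
    twistedSum ε τ * swapMatrix = ε • (swapMatrix * twistedSum ε τ) := by
  rw [twistedSum, mul_add, mul_smul_comm, swapMatrix_mul_kronecker, swapMatrix_mul_kronecker,
    smul_add, smul_smul, hε, one_smul, add_mul, smul_mul_assoc, add_comm]

end TwistedSum

section Pauli

theorem pauli1_mul_self (a : Fin 4) : pauli1 a * pauli1 a = 1 := by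
  fin_cases a <;> simp [pauli1, Matrix.one_fin_two]

theorem trace_pauli1_mul_pauli1 (a b : Fin 4) :
    (pauli1 a * pauli1 b).trace = if a = b then 2 else 0 := by
  fin_cases a <;> fin_cases b <;> simp [pauli1, Matrix.trace_fin_two] <;> norm_num

theorem exists_pauli1_mul_pauli1 (a b : Fin 4) :
    ∃ ε : ℂ, ε * ε = 1 ∧ pauli1 a * pauli1 b = ε • (pauli1 b * pauli1 a) := by
  fin_cases a <;> fin_cases b <;>
    first
    | (refine ⟨1, by norm_num, ?_⟩; simp [pauli1]; done)
    | (refine ⟨-1, by norm_num, ?_⟩; simp [pauli1])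

theorem sum_pauli1_mul_pauli1 (i j k l : Fin 2) :
    ∑ a, pauli1 a i j * pauli1 a k l = if i = l ∧ k = j then 2 else 0 := by
  fin_cases i <;> fin_cases j <;> fin_cases k <;> fin_cases l <;>
    simp [pauli1, Fin.sum_univ_four] <;> norm_num

variable {q : ℕ}

theorem PauliOp_eq_piKronecker (a : Fin q → Fin 4) :
    PauliOp a = piKronecker fun i => pauli1 (a i) := rfl

theorem PauliOp_zero : PauliOp (0 : Fin q → Fin 4) = 1 := piKronecker_one

theorem PauliOp_mul_self (a : Fin q → Fin 4) : PauliOp a * PauliOp a = 1 := by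
  simp only [PauliOp_eq_piKronecker, piKronecker_mul, pauli1_mul_self, piKronecker_one]

theorem trace_PauliOp_mul_PauliOp (a b : Fin q → Fin 4) :
    (PauliOp a * PauliOp b).trace = if a = b then 2 ^ q else 0 := by
  simp [PauliOp_eq_piKronecker, piKronecker_mul, trace_piKronecker, trace_pauli1_mul_pauli1,
    Finset.prod_ite_zero, funext_iff]

theorem exists_PauliOp_mul_PauliOp (a b : Fin q → Fin 4) :
    ∃ ε : ℂ, ε * ε = 1 ∧ PauliOp a * PauliOp b = ε • (PauliOp b * PauliOp a) := by
  choose ε hε hab using fun i => exists_pauli1_mul_pauli1 (a i) (b i)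
  refine ⟨∏ i, ε i, by simp only [← Finset.prod_mul_distrib, hε, Finset.prod_const_one], ?_⟩
  simp only [PauliOp_eq_piKronecker, piKronecker_mul, hab, piKronecker_smul]

theorem PauliOp_injective : Function.Injective (PauliOp (q := q)) := by
  intro a b hab
  by_contra hne
  have horth := trace_PauliOp_mul_PauliOp a b
  simp [← hab, trace_PauliOp_mul_PauliOp, hne] at horth

theorem sum_PauliOp_kronecker_self :
    ∑ a : Fin q → Fin 4, PauliOp a ⊗ₖ PauliOp a = (2 ^ q : ℂ) • swapMatrix := by
  ext ⟨x, u⟩ ⟨y, v⟩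
  calc (∑ a : Fin q → Fin 4, PauliOp a ⊗ₖ PauliOp a) (x, u) (y, v)
      = ∏ i, ∑ a, pauli1 a (x i) (y i) * pauli1 a (u i) (v i) := by
        simp [Matrix.sum_apply, PauliOp, Finset.prod_univ_sum, Finset.prod_mul_distrib]
    _ = ((2 ^ q : ℂ) • swapMatrix) (x, u) (y, v) := by
        simp [sum_pauli1_mul_pauli1, Finset.prod_ite_zero, swapMatrix_apply, funext_iff,
          forall_and]

end Pauli

section NormalizedPauli

variable {q : ℕ}

theorem sqrtd_mul_self (q : ℕ) : sqrtd q * sqrtd q = 2 ^ q := by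
  rw [sqrtd, ← Complex.ofReal_mul, Real.mul_self_sqrt (by positivity)]
  norm_cast

theorem sqrtd_ne_zero (q : ℕ) : sqrtd q ≠ 0 := by
  intro h
  have hsq := sqrtd_mul_self q
  rw [h, mul_zero] at hsq
  exact pow_ne_zero q two_ne_zero hsq.symm

theorem inv_sqrtd_mul_inv_sqrtd (q : ℕ) : (sqrtd q)⁻¹ * (sqrtd q)⁻¹ = (2 ^ q)⁻¹ := by
  rw [← mul_inv, sqrtd_mul_self]

theorem sigmaHat_eq_range : sigmaHat q = Set.range fun a => (sqrtd q)⁻¹ • PauliOp a := by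
  ext
  simp [sigmaHat, eq_comm]

theorem finite_sigmaHat : (sigmaHat q).Finite :=
  sigmaHat_eq_range ▸ Set.finite_range _

theorem sigma0_mem_sigmaHat : sigma0 q ∈ sigmaHat q :=
  ⟨0, by rw [PauliOp_zero, sigma0]⟩

theorem mul_self_of_mem_sigmaHat {σ : Mat q} (hσ : σ ∈ sigmaHat q) :
    σ * σ = (2 ^ q : ℂ)⁻¹ • (1 : Mat q) := by
  obtain ⟨a, rfl⟩ := hσ
  rw [smul_mul_smul_comm, PauliOp_mul_self, inv_sqrtd_mul_inv_sqrtd]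

theorem ne_zero_of_mem_sigmaHat {σ : Mat q} (hσ : σ ∈ sigmaHat q) : σ ≠ 0 := by
  rintro rfl
  have hsq := mul_self_of_mem_sigmaHat hσ
  rw [mul_zero] at hsq
  exact smul_ne_zero (inv_ne_zero (pow_ne_zero q two_ne_zero)) one_ne_zero hsq.symm

theorem exists_mul_eq_smul_of_mem_sigmaHat {σ τ : Mat q} (hσ : σ ∈ sigmaHat q)
    (hτ : τ ∈ sigmaHat q) : ∃ ε : ℂ, ε * ε = 1 ∧ σ * τ = ε • (τ * σ) := by
  obtain ⟨a, rfl⟩ := hσ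
  obtain ⟨b, rfl⟩ := hτ
  obtain ⟨ε, hε, hab⟩ := exists_PauliOp_mul_PauliOp a b
  exact ⟨ε, hε, by rw [smul_mul_smul_comm, smul_mul_smul_comm, hab, smul_comm]⟩

theorem trace_eq_zero_of_mem_sigmaSet {τ : Mat q} (hτ : τ ∈ sigmaSet q) : τ.trace = 0 := by
  obtain ⟨⟨a, rfl⟩, hne⟩ := hτ
  have ha : a ≠ 0 := by
    rintro rfl
    exact hne (by rw [PauliOp_zero]; rfl)
  have horth := trace_PauliOp_mul_PauliOp a 0
  rw [PauliOp_zero, mul_one, if_neg ha] at horth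
  rw [Matrix.trace_smul, horth, smul_zero]

theorem finsum_sigmaHat_map_kronecker_self {E : Type*} [AddCommMonoid E] [Module ℂ E]
    (T : BMat q →ₗ[ℂ] E) : ∑ᶠ σ ∈ sigmaHat q, T (σ ⊗ₖ σ) = T swapMatrix := by
  have hinj : Function.Injective fun a : Fin q → Fin 4 => (sqrtd q)⁻¹ • PauliOp a :=
    (smul_right_injective _ (inv_ne_zero (sqrtd_ne_zero q))).comp PauliOp_injective
  rw [sigmaHat_eq_range, finsum_mem_range hinj, finsum_eq_sum_of_fintype, ← map_sum]
  simp only [Matrix.smul_kronecker, Matrix.kronecker_smul, smul_smul, ← Finset.smul_sum,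
    sum_PauliOp_kronecker_self, inv_sqrtd_mul_inv_sqrtd]
  rw [inv_mul_cancel₀ (pow_ne_zero q two_ne_zero), one_smul]

theorem finsum_sigmaHat_trace_smul (A : Mat q) :
    ∑ᶠ σ ∈ sigmaHat q, (σ * A).trace • σ = A := by
  calc ∑ᶠ σ ∈ sigmaHat q, (σ * A).trace • σ
      = ∑ᶠ σ ∈ sigmaHat q, (traceFst ∘ₗ LinearMap.mulRight ℂ (A ⊗ₖ (1 : Mat q))) (σ ⊗ₖ σ) := by
        simp only [LinearMap.comp_apply, LinearMap.mulRight_apply, ← Matrix.mul_kronecker_mul,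
          traceFst_kronecker, mul_one]
    _ = A := by
        rw [finsum_sigmaHat_map_kronecker_self, LinearMap.comp_apply, LinearMap.mulRight_apply,
          traceFst_swapMatrix_mul_kronecker, mul_one]

theorem span_sigmaSet : Submodule.span ℂ (sigmaSet q) =
    LinearMap.ker (Matrix.traceLinearMap (Idx q) ℂ ℂ) := by
  refine le_antisymm (Submodule.span_le.2 fun τ hτ => trace_eq_zero_of_mem_sigmaSet hτ)
    fun A (hA : A.trace = 0) => ?_
  rw [← finsum_sigmaHat_trace_smul A]
  refine finsum_mem_induction (· ∈ Submodule.span ℂ (sigmaSet q)) (zero_mem _)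
    (fun _ _ => add_mem) fun σ hσ => ?_
  rcases eq_or_ne σ (sigma0 q) with rfl | hne
  · simp [sigma0, hA]
  · exact Submodule.smul_mem _ _ (Submodule.subset_span ⟨hσ, hne⟩)

end NormalizedPauli

section TwistedCommutant

variable {q : ℕ} {τ : Mat q} {ε : ℂ}

theorem swapTwist_sigma0_kronecker (G : BMat q) (ε : ℂ) (τ : Mat q) :
    swapTwist G ε (sigma0 q ⊗ₖ τ) = (sqrtd q)⁻¹ • (G * twistedSum ε τ) := by
  rw [swapTwist_kronecker, twistedSum, sigma0, Matrix.smul_kronecker, Matrix.kronecker_smul,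
    smul_comm, ← smul_add, mul_smul_comm]

/-- The normalized Paulis which commute (`ε = 1`) or anticommute (`ε = -1`) with `τ`; up to `σ₀`
and `τ` these are `C_τ` and `N_τ`. -/
def twistedCommutant (ε : ℂ) (τ : Mat q) : Set (Mat q) :=
  {σ | σ ∈ sigmaHat q ∧ σ * τ = ε • (τ * σ)}

theorem twistedCommutant_subset : twistedCommutant ε τ ⊆ sigmaHat q :=
  fun _ hσ => hσ.1

theorem finite_twistedCommutant : (twistedCommutant ε τ).Finite :=
  finite_sigmaHat.subset twistedCommutant_subset

theorem finsum_twistedCommutant_kronecker_self_mul (hε : ε * ε = 1) (hτ : τ ∈ sigmaHat q) :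
    ∑ᶠ σ ∈ twistedCommutant ε τ, (σ ⊗ₖ σ) * twistedSum ε τ = swapMatrix * twistedSum ε τ := by
  set K := twistedSum ε τ with hK
  let T : BMat q →ₗ[ℂ] BMat q :=
    (2 : ℂ)⁻¹ • (LinearMap.mulRight ℂ K + ε • LinearMap.mulLeft ℂ K)
  have hT (M : BMat q) : T M = (2 : ℂ)⁻¹ • (M * K + ε • (K * M)) := rfl
  have hhalf (M : BMat q) : (2 : ℂ)⁻¹ • (M + M) = M := by
    rw [← two_smul ℂ M, smul_smul, inv_mul_cancel₀ two_ne_zero, one_smul]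
  have hmem {σ : Mat q} (hσ : σ ∈ twistedCommutant ε τ) : T (σ ⊗ₖ σ) = (σ ⊗ₖ σ) * K := by
    rw [hT, twistedSum_mul_kronecker_self hε hσ.2, smul_smul, hε, one_smul, hhalf]
  have hnotMem {σ : Mat q} (hσ : σ ∈ sigmaHat q \ twistedCommutant ε τ) : T (σ ⊗ₖ σ) = 0 := by
    obtain ⟨δ, hδ, hστ⟩ := exists_mul_eq_smul_of_mem_sigmaHat hσ.1 hτ
    have hne : δ ≠ ε := fun h => hσ.2 ⟨hσ.1, h ▸ hστ⟩
    have hneg : δ = -ε :=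
      (mul_self_eq_mul_self_iff.1 (hδ.trans hε.symm)).resolve_left hne
    rw [hT, twistedSum_mul_kronecker_self hδ hστ, smul_smul, hneg, mul_neg, hε, neg_one_smul,
      add_neg_cancel, smul_zero]
  calc ∑ᶠ σ ∈ twistedCommutant ε τ, (σ ⊗ₖ σ) * K
      = ∑ᶠ σ ∈ twistedCommutant ε τ, T (σ ⊗ₖ σ) := finsum_mem_congr rfl fun σ hσ => (hmem hσ).symm
    _ = ∑ᶠ σ ∈ sigmaHat q, T (σ ⊗ₖ σ) := by
        rw [← finsum_mem_add_sdiff twistedCommutant_subset finite_sigmaHat,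
          finsum_mem_of_eqOn_zero fun σ hσ => hnotMem hσ, add_zero]
    _ = T swapMatrix := finsum_sigmaHat_map_kronecker_self T
    _ = swapMatrix * K := by
        rw [hT, hK, twistedSum_mul_swapMatrix hε, smul_smul, hε, one_smul, hhalf]

theorem two_mul_ncard_twistedCommutant (hε : ε * ε = 1) (hτ : τ ∈ sigmaSet q) :
    2 * (twistedCommutant ε τ).ncard = 4 ^ q := by
  let T : BMat q →ₗ[ℂ] Mat q := traceFst ∘ₗ LinearMap.mulLeft ℂ swapMatrix
  have hT (M : BMat q) : T M = traceFst (swapMatrix * M) := rfl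
  have hterm {σ : Mat q} (hσ : σ ∈ twistedCommutant ε τ) :
      T ((σ ⊗ₖ σ) * twistedSum ε τ) = (2 * (2 ^ q : ℂ)⁻¹) • τ := by
    have hστσ : ε • (σ * τ * σ) = σ * (σ * τ) := by
      rw [mul_assoc, ← mul_smul_comm, ← hσ.2]
    rw [hT, kronecker_self_mul_twistedSum, mul_add, mul_smul_comm, map_add, map_smul,
      traceFst_swapMatrix_mul_kronecker, traceFst_swapMatrix_mul_kronecker, hστσ, ← mul_assoc,
      mul_self_of_mem_sigmaHat hσ.1, smul_mul_assoc, one_mul, ← two_smul ℂ, smul_smul]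
  have hswap : T (swapMatrix * twistedSum ε τ) = (2 ^ q : ℂ) • τ := by
    rw [hT, ← mul_assoc, swapMatrix_mul_self, one_mul, twistedSum, map_add, map_smul,
      traceFst_kronecker, traceFst_kronecker, trace_eq_zero_of_mem_sigmaSet hτ]
    simp
  have hsum : ((twistedCommutant ε τ).ncard * (2 * (2 ^ q : ℂ)⁻¹)) • τ = (2 ^ q : ℂ) • τ := by
    calc ((twistedCommutant ε τ).ncard * (2 * (2 ^ q : ℂ)⁻¹)) • τ
        = ∑ᶠ σ ∈ twistedCommutant ε τ, (2 * (2 ^ q : ℂ)⁻¹) • τ := by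
          rw [finsum_mem_eq_finite_toFinset_sum _ finite_twistedCommutant, Finset.sum_const,
            ← Set.ncard_eq_toFinset_card _ finite_twistedCommutant, mul_smul,
            Nat.cast_smul_eq_nsmul]
      _ = ∑ᶠ σ ∈ twistedCommutant ε τ, T ((σ ⊗ₖ σ) * twistedSum ε τ) :=
          finsum_mem_congr rfl fun σ hσ => (hterm hσ).symm
      _ = T (∑ᶠ σ ∈ twistedCommutant ε τ, (σ ⊗ₖ σ) * twistedSum ε τ) :=
          (T.toAddMonoidHom.map_finsum_mem _ finite_twistedCommutant).symm
      _ = (2 ^ q : ℂ) • τ := by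
          rw [finsum_twistedCommutant_kronecker_self_mul hε hτ.1, hswap]
  have hcard := smul_left_injective ℂ (ne_zero_of_mem_sigmaHat hτ.1) hsum
  have hcardC : (2 * (twistedCommutant ε τ).ncard : ℂ) = 4 ^ q := by
    calc (2 * (twistedCommutant ε τ).ncard : ℂ)
        = (twistedCommutant ε τ).ncard * (2 * (2 ^ q : ℂ)⁻¹) * 2 ^ q := by field_simp
      _ = 4 ^ q := by rw [hcard, ← mul_pow]; norm_num
  exact_mod_cast hcardC

theorem twistedCommutant_neg_one (hτ : τ ≠ 0) : twistedCommutant (-1) τ = NSet τ := by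
  have hσ₀ : sigma0 q * τ + τ * sigma0 q ≠ 0 := by
    rw [sigma0, smul_mul_assoc, one_mul, mul_smul_comm, mul_one, ← two_smul ℂ]
    simp [hτ, sqrtd_ne_zero]
  ext σ
  rw [twistedCommutant, NSet, Set.mem_ofPred_eq, Set.mem_ofPred_eq, neg_one_smul,
    ← add_eq_zero_iff_eq_neg]
  refine ⟨fun h => ⟨⟨h.1, ?_⟩, h.2⟩, fun h => ⟨h.1.1, h.2⟩⟩
  rintro rfl
  exact hσ₀ h.2

theorem twistedCommutant_one (hτ : τ ∈ sigmaHat q) :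
    twistedCommutant 1 τ = insert (sigma0 q) (insert τ (CSet τ)) := by
  have hσ₀ : sigma0 q * τ = τ * sigma0 q := by
    rw [sigma0, smul_mul_assoc, one_mul, mul_smul_comm, mul_one]
  ext σ
  simp only [twistedCommutant, CSet, sigmaSet, Set.mem_ofPred_eq, Set.mem_insert_iff, Set.mem_sdiff,
    Set.mem_singleton_iff, one_smul]
  constructor
  · tauto
  · rintro (rfl | rfl | h)
    exacts [⟨sigma0_mem_sigmaHat, hσ₀⟩, ⟨hτ, rfl⟩, ⟨h.1.1, h.2.2⟩]

end TwistedCommutant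

section AdjointVectors

variable {q : ℕ} {τ : Mat q}

theorem SVec_nprod (σ τ : Mat q) :
    SVec σ (nprod σ τ) = ((Real.sqrt 2 : ℂ)⁻¹ * sqrtd q) • ((σ ⊗ₖ σ) * twistedSum 1 τ) := by
  rw [kronecker_self_mul_twistedSum, SVec, nprod, Matrix.kronecker_smul, Matrix.smul_kronecker,
    ← smul_add, smul_smul, one_smul]

theorem AVec_I_smul_nprod (σ τ : Mat q) :
    AVec σ (Complex.I • nprod σ τ) =
      ((Real.sqrt 2 : ℂ)⁻¹ * (Complex.I * sqrtd q)) • ((σ ⊗ₖ σ) * twistedSum (-1) τ) := by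
  rw [kronecker_self_mul_twistedSum, AVec, nprod, smul_smul, Matrix.kronecker_smul,
    Matrix.smul_kronecker, ← smul_sub, smul_smul, neg_one_smul, sub_eq_add_neg]

theorem two_mul_ncard_NSet (hτ : τ ∈ sigmaSet q) : 2 * (NSet τ).ncard = 4 ^ q := by
  rw [← twistedCommutant_neg_one (ne_zero_of_mem_sigmaHat hτ.1)]
  exact two_mul_ncard_twistedCommutant (by norm_num) hτ

theorem finite_NSet : (NSet τ).Finite :=
  finite_sigmaHat.subset fun _ hσ => hσ.1.1

theorem finite_CSet : (CSet τ).Finite :=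
  finite_sigmaHat.subset fun _ hσ => hσ.1.1

theorem sigma0_notMem_insert_CSet (hτ : τ ∈ sigmaSet q) : sigma0 q ∉ insert τ (CSet τ) := by
  rintro (h | h)
  exacts [hτ.2 h.symm, h.1.2 rfl]

theorem self_notMem_CSet : τ ∉ CSet τ :=
  fun h => h.2.1 rfl

theorem two_mul_ncard_CSet_add_four (hτ : τ ∈ sigmaSet q) : 2 * (CSet τ).ncard + 4 = 4 ^ q := by
  rw [← two_mul_ncard_twistedCommutant (mul_one 1) hτ, twistedCommutant_one hτ.1,
    Set.ncard_insert_of_notMem (sigma0_notMem_insert_CSet hτ) (finite_CSet.insert τ),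
    Set.ncard_insert_of_notMem self_notMem_CSet finite_CSet]
  ring

theorem finsum_NSet_kronecker_self_mul (hτ : τ ∈ sigmaSet q) :
    ∑ᶠ σ ∈ NSet τ, (σ ⊗ₖ σ) * twistedSum (-1) τ = swapMatrix * twistedSum (-1) τ := by
  rw [← twistedCommutant_neg_one (ne_zero_of_mem_sigmaHat hτ.1)]
  exact finsum_twistedCommutant_kronecker_self_mul (by norm_num) hτ.1

theorem sigma0_kronecker_sigma0_mul (A : BMat q) :
    (sigma0 q ⊗ₖ sigma0 q) * A = (2 ^ q : ℂ)⁻¹ • A := by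
  rw [sigma0, Matrix.smul_kronecker, Matrix.kronecker_smul, smul_smul, inv_sqrtd_mul_inv_sqrtd,
    Matrix.one_kronecker_one, smul_mul_assoc, one_mul]

theorem kronecker_self_mul_twistedSum_one_self (hτ : τ ∈ sigmaHat q) :
    (τ ⊗ₖ τ) * twistedSum 1 τ = (2 ^ q : ℂ)⁻¹ • twistedSum 1 τ := by
  rw [kronecker_self_mul_twistedSum, mul_self_of_mem_sigmaHat hτ, twistedSum,
    Matrix.kronecker_smul, Matrix.smul_kronecker, one_smul, one_smul, smul_add, add_comm]

theorem finsum_CSet_kronecker_self_mul (hτ : τ ∈ sigmaSet q) :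
    ∑ᶠ σ ∈ CSet τ, (σ ⊗ₖ σ) * twistedSum 1 τ =
      (2 ^ q : ℂ)⁻¹ • (((2 ^ q : ℂ) • swapMatrix - (2 : ℂ) • 1) * twistedSum 1 τ) := by
  have hsum := finsum_twistedCommutant_kronecker_self_mul (mul_one 1) hτ.1
  rw [twistedCommutant_one hτ.1,
    finsum_mem_insert _ (sigma0_notMem_insert_CSet hτ) (finite_CSet.insert τ),
    finsum_mem_insert _ self_notMem_CSet finite_CSet, sigma0_kronecker_sigma0_mul,
    kronecker_self_mul_twistedSum_one_self hτ.1] at hsum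
  rw [sub_mul, smul_mul_assoc, smul_mul_assoc, one_mul, smul_sub, ← hsum,
    inv_smul_smul₀ (pow_ne_zero q two_ne_zero), two_smul, smul_add]
  abel

/-- The operator `i F / √2`, with `F` the swap, which realizes `θ'` as a swap twist. -/
def antiAdjFactor (q : ℕ) : BMat q :=
  (Complex.I * (Real.sqrt 2 : ℂ)⁻¹) • swapMatrix

/-- The operator `(d F - 2) / √(2 (d² - 4))`, with `F` the swap, which realizes `θ` as a swap
twist. -/
def symAdjFactor (q : ℕ) : BMat q :=
  ((Real.sqrt (4 ^ q - 4) : ℂ)⁻¹ * (Real.sqrt 2 : ℂ)⁻¹) • ((2 ^ q : ℂ) • swapMatrix - (2 : ℂ) • 1)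

theorem swapTwist_antiAdjFactor (hτ : τ ∈ sigmaSet q) :
    swapTwist (antiAdjFactor q) (-1) (sigma0 q ⊗ₖ τ) = vadjA τ := by
  have hcard : (2 * (NSet τ).ncard : ℝ) = (2 ^ q) ^ 2 := by
    rw [← pow_mul, mul_comm q, pow_mul]
    exact_mod_cast two_mul_ncard_NSet hτ
  have hnorm : (Real.sqrt (2 * (NSet τ).ncard) : ℂ) = 2 ^ q := by
    rw [hcard, Real.sqrt_sq (by positivity)]
    norm_cast
  rw [vadjA, hnorm, swapTwist_sigma0_kronecker, antiAdjFactor]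
  simp only [AVec_I_smul_nprod]
  rw [← smul_finsum_mem finite_NSet, finsum_NSet_kronecker_self_mul hτ, smul_smul,
    smul_mul_assoc, smul_smul]
  congr 1
  rw [← sqrtd_mul_self]
  field_simp [sqrtd_ne_zero]

theorem swapTwist_symAdjFactor (hτ : τ ∈ sigmaSet q) :
    swapTwist (symAdjFactor q) 1 (sigma0 q ⊗ₖ τ) = vadjS τ := by
  have hnorm : (2 * (CSet τ).ncard : ℝ) = 4 ^ q - 4 := by
    rw [eq_sub_iff_add_eq]
    exact_mod_cast two_mul_ncard_CSet_add_four hτ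
  rw [vadjS, hnorm, swapTwist_sigma0_kronecker, symAdjFactor]
  simp only [SVec_nprod]
  rw [← smul_finsum_mem finite_CSet, finsum_CSet_kronecker_self_mul hτ, smul_smul, smul_smul,
    smul_mul_assoc, smul_smul]
  congr 1
  rw [← sqrtd_mul_self]
  field_simp [sqrtd_ne_zero]

theorem isUnit_antiAdjFactor : IsUnit (antiAdjFactor q) := by
  rw [antiAdjFactor, ← sub_zero (_ • swapMatrix), ← zero_smul ℂ 1]
  exact isUnit_smul_swapMatrix_sub_smul_one (by simp)

theorem isUnit_symAdjFactor (hq : 2 ≤ q) : IsUnit (symAdjFactor q) := by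
  have hpow : (4 : ℝ) < 4 ^ q := lt_self_pow₀ (by norm_num) hq
  have hd : (2 ^ q * 2 ^ q : ℂ) ≠ 2 * 2 := by
    rw [← mul_pow, show (2 * 2 : ℂ) = 4 by norm_num]
    exact_mod_cast hpow.ne'
  have hc : (Real.sqrt (4 ^ q - 4) : ℂ)⁻¹ * (Real.sqrt 2 : ℂ)⁻¹ ≠ 0 := by
    simpa [Real.sqrt_eq_zero', not_le] using hpow
  rw [symAdjFactor, smul_sub, smul_smul, smul_smul]
  refine isUnit_smul_swapMatrix_sub_smul_one fun h => hd ?_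
  rw [mul_mul_mul_comm, mul_mul_mul_comm _ (2 : ℂ)] at h
  exact mul_left_cancel₀ (mul_ne_zero hc hc) h

theorem commute_antiAdjFactor (U : Mat q) : Commute (antiAdjFactor q) (U ⊗ₖ U) :=
  (commute_swapMatrix_kronecker_self U).smul_left _

theorem commute_symAdjFactor (U : Mat q) : Commute (symAdjFactor q) (U ⊗ₖ U) :=
  (((commute_swapMatrix_kronecker_self U).smul_left _).sub_left
    ((Commute.one_left _).smul_left _)).smul_left _

end AdjointVectors

section AdjointSectors

variable {q : ℕ}

theorem twoCopy_apply (U : Mat q) (x : BMat q) : twoCopy U x = (U ⊗ₖ U) * x * (Uᴴ ⊗ₖ Uᴴ) := by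
  rw [← Matrix.conjTranspose_kronecker]
  rfl

theorem twoCopy_kronecker (U A B : Mat q) :
    twoCopy U (A ⊗ₖ B) = (U * A * Uᴴ) ⊗ₖ (U * B * Uᴴ) := by
  rw [twoCopy_apply, Matrix.mul_kronecker_mul, Matrix.mul_kronecker_mul]

theorem swapTwist_twoCopy {G : BMat q} {U : Mat q} (hG : Commute G (U ⊗ₖ U)) (ε : ℂ)
    (x : BMat q) : swapTwist G ε (twoCopy U x) = twoCopy U (swapTwist G ε x) := by
  simp only [twoCopy_apply]
  exact swapTwist_conj ε hG (commute_swapMatrix_kronecker_self U)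
    (commute_swapMatrix_kronecker_self Uᴴ) x

theorem setOf_exists_mem_eq {α β : Type*} (f : α → β) (s : Set α) :
    {y | ∃ x ∈ s, y = f x} = f '' s := by
  ext
  simp only [Set.mem_ofPred_eq, Set.mem_image, eq_comm]

theorem Vr_eq_span_image :
    Vr q = Submodule.span ℂ ((fun τ => sigma0 q ⊗ₖ τ) '' sigmaSet q) := by
  rw [Vr, setOf_exists_mem_eq]

theorem mem_Vr_iff {x : BMat q} : x ∈ Vr q ↔ ∃ A : Mat q, A.trace = 0 ∧ sigma0 q ⊗ₖ A = x := by
  have hmap : Vr q = (Submodule.span ℂ (sigmaSet q)).map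
      (Matrix.kroneckerBilinear (R := ℂ) (sigma0 q)) := by
    rw [Submodule.map_span, Vr_eq_span_image]
    rfl
  rw [hmap, span_sigmaSet]
  rfl

theorem twoCopy_mem_Vr {U : Mat q} (hU : U ∈ Matrix.unitaryGroup (Idx q) ℂ) {x : BMat q}
    (hx : x ∈ Vr q) : twoCopy U x ∈ Vr q := by
  obtain ⟨A, hA, rfl⟩ := mem_Vr_iff.1 hx
  have hright : U * Uᴴ = 1 := Matrix.mem_unitaryGroup_iff.1 hU
  have hleft : Uᴴ * U = 1 := Matrix.mem_unitaryGroup_iff'.1 hU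
  refine mem_Vr_iff.2 ⟨U * A * Uᴴ, ?_, ?_⟩
  · rw [Matrix.trace_mul_comm, ← mul_assoc, hleft, one_mul, hA]
  · rw [twoCopy_kronecker, sigma0, mul_smul_comm, mul_one, smul_mul_assoc, hright]

theorem eq_zero_of_swapTwist_eq_zero {G : BMat q} (hG : IsUnit G) (ε : ℂ) {x : BMat q}
    (hx : x ∈ Vr q) (h : swapTwist G ε x = 0) : x = 0 := by
  obtain ⟨A, hA, rfl⟩ := mem_Vr_iff.1 hx
  rw [swapTwist_kronecker, hG.mul_right_eq_zero] at h
  have htrace := congrArg traceFst h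
  rw [map_add, map_smul, traceFst_kronecker, traceFst_kronecker, hA, zero_smul, smul_zero,
    add_zero, map_zero] at htrace
  have hσ₀ : (sigma0 q).trace ≠ 0 := by
    simp [sigma0, sqrtd_ne_zero]
  rw [(smul_eq_zero_iff_right hσ₀).1 htrace, Matrix.kronecker_zero]

variable {v : Mat q → BMat q}

theorem map_Vr_eq_span {θ : BMat q →ₗ[ℂ] BMat q}
    (hθ : ∀ τ ∈ sigmaSet q, θ (sigma0 q ⊗ₖ τ) = v τ) :
    (Vr q).map θ = Submodule.span ℂ {M | ∃ τ ∈ sigmaSet q, M = v τ} := by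
  rw [Vr_eq_span_image, Submodule.map_span, Set.image_image, Set.image_congr hθ,
    setOf_exists_mem_eq]

theorem eqOn_Vr {θ T : BMat q →ₗ[ℂ] BMat q}
    (hθ : ∀ τ ∈ sigmaSet q, θ (sigma0 q ⊗ₖ τ) = v τ)
    (hT : ∀ τ ∈ sigmaSet q, T (sigma0 q ⊗ₖ τ) = v τ) : Set.EqOn θ T (Vr q) := by
  refine LinearMap.eqOn_span ?_
  rintro _ ⟨τ, hτ, rfl⟩
  rw [hθ τ hτ, hT τ hτ]

theorem isomorphism_of_swapTwist {G : BMat q} {ε : ℂ} (hG : IsUnit G)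
    (hcomm : ∀ U : Mat q, Commute G (U ⊗ₖ U))
    (hv : ∀ τ ∈ sigmaSet q, swapTwist G ε (sigma0 q ⊗ₖ τ) = v τ) :
    (∃ θ : BMat q →ₗ[ℂ] BMat q, ∀ τ ∈ sigmaSet q, θ (sigma0 q ⊗ₖ τ) = v τ) ∧
    (∀ θ : BMat q →ₗ[ℂ] BMat q, (∀ τ ∈ sigmaSet q, θ (sigma0 q ⊗ₖ τ) = v τ) →
      (Vr q).map θ = Submodule.span ℂ {M | ∃ τ ∈ sigmaSet q, M = v τ} ∧
      (∀ x ∈ Vr q, θ x = 0 → x = 0) ∧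
      ∀ U ∈ Matrix.unitaryGroup (Idx q) ℂ, ∀ x ∈ Vr q, θ (twoCopy U x) = twoCopy U (θ x)) ∧
    ∀ U ∈ Matrix.unitaryGroup (Idx q) ℂ,
      ∀ y ∈ Submodule.span ℂ {M | ∃ τ ∈ sigmaSet q, M = v τ},
        twoCopy U y ∈ Submodule.span ℂ {M | ∃ τ ∈ sigmaSet q, M = v τ} := by
  refine ⟨⟨swapTwist G ε, hv⟩, fun θ hθ => ⟨map_Vr_eq_span hθ, fun x hx h => ?_,
    fun U hU x hx => ?_⟩, fun U hU y hy => ?_⟩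
  · exact eq_zero_of_swapTwist_eq_zero hG ε hx (eqOn_Vr hθ hv hx ▸ h)
  · rw [eqOn_Vr hθ hv hx, eqOn_Vr hθ hv (twoCopy_mem_Vr hU hx), swapTwist_twoCopy (hcomm U)]
  · rw [← map_Vr_eq_span hv] at hy ⊢
    obtain ⟨x, hx, rfl⟩ := hy
    exact ⟨twoCopy U x, twoCopy_mem_Vr hU hx, swapTwist_twoCopy (hcomm U) ε x⟩

end AdjointSectors

theorem statement6_general (q : ℕ) :
    (2 ≤ q →
      (∃ θ : BMat q →ₗ[ℂ] BMat q, ∀ τ ∈ sigmaSet q, θ (sigma0 q ⊗ₖ τ) = vadjS τ) ∧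
      (∀ θ : BMat q →ₗ[ℂ] BMat q, (∀ τ ∈ sigmaSet q, θ (sigma0 q ⊗ₖ τ) = vadjS τ) →
        (Vr q).map θ = VadjS q ∧
        (∀ x ∈ Vr q, θ x = 0 → x = 0) ∧
        ∀ U ∈ Matrix.unitaryGroup (Idx q) ℂ, ∀ x ∈ Vr q, θ (twoCopy U x) = twoCopy U (θ x)) ∧
      ∀ U ∈ Matrix.unitaryGroup (Idx q) ℂ, ∀ y ∈ VadjS q, twoCopy U y ∈ VadjS q) ∧
    (∃ θ' : BMat q →ₗ[ℂ] BMat q, ∀ τ ∈ sigmaSet q, θ' (sigma0 q ⊗ₖ τ) = vadjA τ) ∧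
    (∀ θ' : BMat q →ₗ[ℂ] BMat q, (∀ τ ∈ sigmaSet q, θ' (sigma0 q ⊗ₖ τ) = vadjA τ) →
      (Vr q).map θ' = VadjA q ∧
      (∀ x ∈ Vr q, θ' x = 0 → x = 0) ∧
      ∀ U ∈ Matrix.unitaryGroup (Idx q) ℂ, ∀ x ∈ Vr q, θ' (twoCopy U x) = twoCopy U (θ' x)) ∧
    ∀ U ∈ Matrix.unitaryGroup (Idx q) ℂ, ∀ y ∈ VadjA q, twoCopy U y ∈ VadjA q := by
  refine ⟨fun hq => ?_, ?_⟩
  · exact isomorphism_of_swapTwist (isUnit_symAdjFactor hq) commute_symAdjFactor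
      fun τ hτ => swapTwist_symAdjFactor hτ
  · exact isomorphism_of_swapTwist isUnit_antiAdjFactor commute_antiAdjFactor
      fun τ hτ => swapTwist_antiAdjFactor hτ

/-- the maps `θ : σ₀⊗τ ↦ v^[adj]_τ` and `θ' : σ₀⊗τ ↦ v^{adj}_τ` are
linear isomorphisms of `V_r` onto `V_[adj]` resp. `V_{adj}` intertwining the two-copy
representation; in particular `V_[adj]` and `V_{adj}` are invariant. -/
theorem statement6 (q : ℕ) (hq : 2 ≤ q) :
    (∃ θ : BMat q →ₗ[ℂ] BMat q, ∀ τ ∈ sigmaSet q, θ (sigma0 q ⊗ₖ τ) = vadjS τ) ∧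
    (∀ θ : BMat q →ₗ[ℂ] BMat q, (∀ τ ∈ sigmaSet q, θ (sigma0 q ⊗ₖ τ) = vadjS τ) →
      Submodule.map θ (Vr q) = VadjS q ∧
      (∀ x ∈ Vr q, θ x = 0 → x = 0) ∧
      ∀ U ∈ Cliff q, ∀ x ∈ Vr q, θ (twoCopy U x) = twoCopy U (θ x)) ∧
    (∃ θ' : BMat q →ₗ[ℂ] BMat q, ∀ τ ∈ sigmaSet q, θ' (sigma0 q ⊗ₖ τ) = vadjA τ) ∧
    (∀ θ' : BMat q →ₗ[ℂ] BMat q, (∀ τ ∈ sigmaSet q, θ' (sigma0 q ⊗ₖ τ) = vadjA τ) →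
      Submodule.map θ' (Vr q) = VadjA q ∧
      (∀ x ∈ Vr q, θ' x = 0 → x = 0) ∧
      ∀ U ∈ Cliff q, ∀ x ∈ Vr q, θ' (twoCopy U x) = twoCopy U (θ' x)) ∧
    IsInvariant q (VadjS q) ∧ IsInvariant q (VadjA q) := by
  obtain ⟨hS, hA, hAiso, hAinv⟩ := statement6_general q
  obtain ⟨hS, hSiso, hSinv⟩ := hS hq
  exact ⟨hS, fun θ hθ => (hSiso θ hθ).imp_right (And.imp_right fun h U hU => h U hU.1),
    hA, fun θ hθ => (hAiso θ hθ).imp_right (And.imp_right fun h U hU => h U hU.1),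
    fun U hU => hSinv U hU.1, fun U hU => hAinv U hU.1⟩

end CliffordPaper
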